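/- Right eigenvector decomposition of the primitive-variable MHD matrix: under the stated hypotheses, let T^x be the 8×8 matrix whose columns are r₁, r₂, r₃, r₄ = e₁, r₅ = e₆, r₆, r₇, r₈ (the fast, Alfvén, slow, entropy, and divergence eigenvectors), and let Λ = diag(u − c_f, u − c_a, u − c_s, u, u, u + c_s, u + c_a, u + c_f). Then D^x · T^x = T^x · Λ. -/

import Mathlib

/-!
The magnetosonic waves move density, pressure and normal velocity together with the components of
the transverse velocity and magnetic field along `(β₂, β₃)`, while the Alfvén waves move only the
components orthogonal to `(β₂, β₃)`.
Write `k² = (b₂² + b₃²) / ρ`. The eigenvector equations then reduce to scalar identities that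
follow from `c_f² + c_s² = c² + c_a² + k²` and `c_f c_s = c c_a`. These give
`(c_f² - c²) (c² - c_s²) = (c k)²`, and taking square roots yields the relations
`α_s c k = α_f (c_f² - c²)` and `α_f c k = α_s (c² - c_s²)` that couple the acoustic and magnetic
parts. The slow waves arise from the fast ones under `(c_f, c_s, α_f, α_s) ↦ (c_s, c_f, α_s, -α_f)`
and the left-going waves from the right-going ones by reversing the sign of both speeds.
-/

open Matrix

theorem mul_eq_mul_diagonal_iff_mulVec {m n R : Type*} [Fintype m] [Fintype n] [DecidableEq n]
    [CommSemiring R] {A : Matrix m m R} {T : Matrix m n R} {d : n → R} :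
    A * T = T * diagonal d ↔ ∀ j, A *ᵥ Tᵀ j = d j • Tᵀ j := by
  simp_rw [← Matrix.ext_iff, funext_iff, mul_diagonal, Pi.smul_apply, smul_eq_mul, mul_comm (d _)]
  exact forall_comm

theorem sign_mul_self_eq_abs (x : ℝ) : Real.sign x * x = |x| := by
  rcases lt_trichotomy x 0 with h | rfl | h
  · rw [Real.sign_of_neg h, abs_of_neg h, neg_one_mul]
  · simp
  · rw [Real.sign_of_pos h, abs_of_pos h, one_mul]

theorem abs_mul_eq_self_of_mul_self_eq_abs {s x : ℝ} (h : s * x = |x|) : |x| * s = x := by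
  rcases eq_or_ne x 0 with rfl | hx
  · simp
  · apply mul_right_cancel₀ hx
    rw [mul_assoc, h, abs_mul_abs_self]

theorem div_sqrt_sq_add_div_sqrt_sq {x y : ℝ} (h : 0 < x ^ 2 + y ^ 2) :
    (x / √(x ^ 2 + y ^ 2)) ^ 2 + (y / √(x ^ 2 + y ^ 2)) ^ 2 = 1 := by
  rw [div_pow, div_pow, Real.sq_sqrt h.le, ← add_div, div_self h.ne']

theorem sqrt_mul_sqrt_div {ρ : ℝ} (hρ : 0 < ρ) (x : ℝ) : √ρ * √(x / ρ) = √x := by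
  rw [← Real.sqrt_mul hρ.le, mul_div_cancel₀ _ hρ.ne']

/-- `cf` and `cs` are the fast and slow magnetosonic speeds for sound speed `c`, Alfvén speed `a`
and transverse Alfvén speed `k`: their squares are the roots of
`X ^ 2 - (c ^ 2 + a ^ 2 + k ^ 2) * X + c ^ 2 * a ^ 2`, which is encoded by Vieta's relations. -/
structure IsMagnetosonicPair (c a k cf cs : ℝ) : Prop where
  slow_nonneg : 0 ≤ cs
  slow_le_fast : cs ≤ cf
  sq_add_sq : cf ^ 2 + cs ^ 2 = c ^ 2 + a ^ 2 + k ^ 2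
  fast_mul_slow : cf * cs = c * a

/-- `αf` and `αs` are the normalization weights of the fast and slow magnetosonic eigenvectors.
The defining quotients are cleared of denominators, so that the weights are meaningful also when
the two speeds coincide. -/
structure IsMagnetosonicWeights (c cf cs αf αs : ℝ) : Prop where
  fast_nonneg : 0 ≤ αf
  slow_nonneg : 0 ≤ αs
  fast_sq_mul : αf ^ 2 * (cf ^ 2 - cs ^ 2) = c ^ 2 - cs ^ 2
  slow_sq_mul : αs ^ 2 * (cf ^ 2 - cs ^ 2) = cf ^ 2 - c ^ 2

namespace IsMagnetosonicPair

variable {c a k cf cs αf αs : ℝ}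

theorem sq_sub_mul_sub_sq (h : IsMagnetosonicPair c a k cf cs) :
    (cf ^ 2 - c ^ 2) * (c ^ 2 - cs ^ 2) = (c * k) ^ 2 := by
  linear_combination c ^ 2 * h.sq_add_sq - (cf * cs + c * a) * h.fast_mul_slow

theorem slow_sq_le_fast_sq (h : IsMagnetosonicPair c a k cf cs) : cs ^ 2 ≤ cf ^ 2 :=
  pow_le_pow_left₀ h.slow_nonneg h.slow_le_fast 2

-- The factors in `sq_sub_mul_sub_sq` have nonnegative product and sum, so neither is negative.
theorem sound_sq_le_fast_sq (h : IsMagnetosonicPair c a k cf cs) : c ^ 2 ≤ cf ^ 2 := by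
  nlinarith [h.sq_sub_mul_sub_sq, h.slow_sq_le_fast_sq, sq_nonneg (c * k)]

theorem slow_sq_le_sound_sq (h : IsMagnetosonicPair c a k cf cs) : cs ^ 2 ≤ c ^ 2 := by
  nlinarith [h.sq_sub_mul_sub_sq, h.slow_sq_le_fast_sq, sq_nonneg (c * k)]

theorem slow_lt_fast (h : IsMagnetosonicPair c a k cf cs) (hc : c ≠ 0) (hk : k ≠ 0) : cs < cf := by
  refine h.slow_le_fast.lt_of_ne fun heq => ?_
  have hpos : 0 < (c * k) ^ 2 := by positivity
  rw [← h.sq_sub_mul_sub_sq, heq] at hpos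
  nlinarith [sq_nonneg (cf ^ 2 - c ^ 2)]

theorem isMagnetosonicWeights_sqrt (h : IsMagnetosonicPair c a k cf cs) (hlt : cs < cf) :
    IsMagnetosonicWeights c cf cs √((c ^ 2 - cs ^ 2) / (cf ^ 2 - cs ^ 2))
      √((cf ^ 2 - c ^ 2) / (cf ^ 2 - cs ^ 2)) := by
  have hd : 0 < cf ^ 2 - cs ^ 2 := sub_pos.2 (pow_lt_pow_left₀ hlt h.slow_nonneg two_ne_zero)
  have hfast : 0 ≤ cf ^ 2 - c ^ 2 := sub_nonneg.2 h.sound_sq_le_fast_sq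
  have hslow : 0 ≤ c ^ 2 - cs ^ 2 := sub_nonneg.2 h.slow_sq_le_sound_sq
  refine ⟨Real.sqrt_nonneg _, Real.sqrt_nonneg _, ?_, ?_⟩
  · rw [Real.sq_sqrt (by positivity), div_mul_cancel₀ _ hd.ne']
  · rw [Real.sq_sqrt (by positivity), div_mul_cancel₀ _ hd.ne']

theorem slowWeight_mul (h : IsMagnetosonicPair c a k cf cs)
    (hα : IsMagnetosonicWeights c cf cs αf αs) (hck : 0 ≤ c * k) :
    αs * (c * k) = αf * (cf ^ 2 - c ^ 2) := by
  have hfast : 0 ≤ cf ^ 2 - c ^ 2 := sub_nonneg.2 h.sound_sq_le_fast_sq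
  rw [← sq_eq_sq₀ (mul_nonneg hα.slow_nonneg hck) (mul_nonneg hα.fast_nonneg hfast), mul_pow,
    ← h.sq_sub_mul_sub_sq]
  linear_combination (cf ^ 2 - c ^ 2) * (αf ^ 2 * hα.slow_sq_mul - αs ^ 2 * hα.fast_sq_mul)

theorem fastWeight_mul (h : IsMagnetosonicPair c a k cf cs)
    (hα : IsMagnetosonicWeights c cf cs αf αs) (hck : 0 ≤ c * k) :
    αf * (c * k) = αs * (c ^ 2 - cs ^ 2) := by
  have hslow : 0 ≤ c ^ 2 - cs ^ 2 := sub_nonneg.2 h.slow_sq_le_sound_sq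
  rw [← sq_eq_sq₀ (mul_nonneg hα.fast_nonneg hck) (mul_nonneg hα.slow_nonneg hslow), mul_pow,
    ← h.sq_sub_mul_sub_sq]
  linear_combination (c ^ 2 - cs ^ 2) * (αs ^ 2 * hα.fast_sq_mul - αf ^ 2 * hα.slow_sq_mul)

end IsMagnetosonicPair

theorem isMagnetosonicPair_sqrt {c a k A D : ℝ} (hc : 0 ≤ c) (ha : 0 ≤ a)
    (hA : A = c ^ 2 + a ^ 2 + k ^ 2) (hD : D = A ^ 2 - 4 * (c * a) ^ 2) :
    IsMagnetosonicPair c a k √((A + √D) / 2) √((A - √D) / 2) := by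
  have hA0 : 0 ≤ A := by rw [hA]; positivity
  have hD0 : 0 ≤ D := by
    have hsum_sq : D = (c ^ 2 - (a ^ 2 + k ^ 2)) ^ 2 + 4 * (c * k) ^ 2 := by rw [hD, hA]; ring
    rw [hsum_sq]; positivity
  have hDA : √D ≤ A := (Real.sqrt_le_left hA0).2 (by rw [hD]; linarith [sq_nonneg (c * a)])
  have hsqrt_nonneg := Real.sqrt_nonneg D
  have hsqrt_sq := Real.sq_sqrt hD0
  refine ⟨Real.sqrt_nonneg _, Real.sqrt_le_sqrt (by linarith), ?_, ?_⟩
  · rw [Real.sq_sqrt (by linarith), Real.sq_sqrt (by linarith), ← hA]; ring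
  · have hprod : (A + √D) / 2 * ((A - √D) / 2) = (c * a) ^ 2 := by
      linear_combination -hsqrt_sq / 4 - hD / 4
    rw [← Real.sqrt_mul (by linarith), hprod, Real.sqrt_sq (mul_nonneg hc ha)]

theorem isMagnetosonicPair_sqrt_field {ρ c b1 b2 b3 : ℝ} (hρ : 0 < ρ) (hc : 0 ≤ c) :
    IsMagnetosonicPair c √(b1 ^ 2 / ρ) √((b2 ^ 2 + b3 ^ 2) / ρ)
      √((c ^ 2 + (b1 ^ 2 + b2 ^ 2 + b3 ^ 2) / ρ +
        √((c ^ 2 + (b1 ^ 2 + b2 ^ 2 + b3 ^ 2) / ρ) ^ 2 - 4 * c ^ 2 * b1 ^ 2 / ρ)) / 2)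
      √((c ^ 2 + (b1 ^ 2 + b2 ^ 2 + b3 ^ 2) / ρ -
        √((c ^ 2 + (b1 ^ 2 + b2 ^ 2 + b3 ^ 2) / ρ) ^ 2 - 4 * c ^ 2 * b1 ^ 2 / ρ)) / 2) := by
  have ha : √(b1 ^ 2 / ρ) ^ 2 = b1 ^ 2 / ρ := Real.sq_sqrt (by positivity)
  have hk : √((b2 ^ 2 + b3 ^ 2) / ρ) ^ 2 = (b2 ^ 2 + b3 ^ 2) / ρ := Real.sq_sqrt (by positivity)
  apply isMagnetosonicPair_sqrt hc (Real.sqrt_nonneg _)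
  · rw [ha, hk]; ring
  · rw [mul_pow, ha]; ring

/-- The coefficient matrix `D^x` of the one-dimensional MHD equations in the primitive variables
`(ρ, u, v, w, p, b₁, b₂, b₃)`. -/
noncomputable def mhdMatrix (γ ρ p u b1 b2 b3 : ℝ) : Matrix (Fin 8) (Fin 8) ℝ :=
  !![u, ρ, 0, 0, 0, 0, 0, 0;
     0, u, 0, 0, 1 / ρ, 0, b2 / ρ, b3 / ρ;
     0, 0, u, 0, 0, 0, -b1 / ρ, 0;
     0, 0, 0, u, 0, 0, 0, -b1 / ρ;
     0, γ * p, 0, 0, u, 0, 0, 0;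
     0, 0, 0, 0, 0, u, 0, 0;
     0, b2, -b1, 0, 0, 0, u, 0;
     0, b3, 0, -b1, 0, 0, 0, u]

/-- A magnetosonic wave of speed `l` relative to the flow, where `m` is the speed of the companion
magnetosonic wave, `α` the weight of the acoustic part and `α'` that of the magnetic part. The
fast waves have `(α, α', l, m) = (α_f, α_s, ±c_f, ±c_s)`, the slow waves
`(α, α', l, m) = (α_s, -α_f, ±c_s, ±c_f)`. -/
noncomputable def magnetosonicVec (ρ c β1 β2 β3 α α' l m : ℝ) : Fin 8 → ℝ :=
  ![α * ρ, α * l, -(α' * m * β1 * β2), -(α' * m * β1 * β3),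
    α * ρ * c ^ 2, 0, α' * √ρ * c * β2, α' * √ρ * c * β3]

/-- The Alfvén wave moving in the direction `s = ±1` relative to the flow. -/
noncomputable def alfvenVec (ρ β1 β2 β3 s : ℝ) : Fin 8 → ℝ :=
  ![0, 0, s * β3, -(s * β2), 0, 0, -(√ρ * β1 * β3), √ρ * β1 * β2]

/-- The matrix `T^x` of right eigenvectors, with the columns ordered by increasing eigenvalue. -/
noncomputable def rightEigenvectorMatrix (ρ c cf cs β1 β2 β3 αf αs : ℝ) :
    Matrix (Fin 8) (Fin 8) ℝ :=
  (of ![magnetosonicVec ρ c β1 β2 β3 αf αs (-cf) (-cs),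
    alfvenVec ρ β1 β2 β3 (-1),
    magnetosonicVec ρ c β1 β2 β3 αs (-αf) (-cs) (-cf),
    ![1, 0, 0, 0, 0, 0, 0, 0],
    ![0, 0, 0, 0, 0, 1, 0, 0],
    magnetosonicVec ρ c β1 β2 β3 αs (-αf) cs cf,
    alfvenVec ρ β1 β2 β3 1,
    magnetosonicVec ρ c β1 β2 β3 αf αs cf cs])ᵀ

section Eigenvectors

variable {γ ρ p u b1 b2 b3 k c ca β1 β2 β3 : ℝ}

theorem mhdMatrix_mulVec_eq_smul_iff {l r' u' v' w' p' b1' b2' b3' : ℝ} :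
    mhdMatrix γ ρ p u b1 b2 b3 *ᵥ ![r', u', v', w', p', b1', b2', b3'] =
        (u + l) • ![r', u', v', w', p', b1', b2', b3'] ↔
      ρ * u' = l * r' ∧ (p' + b2 * b2' + b3 * b3') / ρ = l * u' ∧ -(b1 * b2' / ρ) = l * v' ∧
        -(b1 * b3' / ρ) = l * w' ∧ γ * p * u' = l * p' ∧ 0 = l * b1' ∧
        b2 * u' - b1 * v' = l * b2' ∧ b3 * u' - b1 * w' = l * b3' := by
  have hsplit : mhdMatrix γ ρ p u b1 b2 b3 *ᵥ ![r', u', v', w', p', b1', b2', b3'] =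
      u • ![r', u', v', w', p', b1', b2', b3'] +
        ![ρ * u', (p' + b2 * b2' + b3 * b3') / ρ, -(b1 * b2' / ρ), -(b1 * b3' / ρ),
          γ * p * u', 0, b2 * u' - b1 * v', b3 * u' - b1 * w'] := by
    ext i
    fin_cases i <;> simp [mhdMatrix, mulVec, dotProduct, Fin.sum_univ_succ] <;> ring
  rw [hsplit, add_smul, add_right_inj]
  simp only [smul_cons, smul_eq_mul, smul_empty, vecCons_inj, and_true]

theorem mhdMatrix_mulVec_density_normalField (r' b1' : ℝ) :
    mhdMatrix γ ρ p u b1 b2 b3 *ᵥ ![r', 0, 0, 0, 0, b1', 0, 0] =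
      u • ![r', 0, 0, 0, 0, b1', 0, 0] := by
  conv_rhs => rw [← add_zero u]
  rw [mhdMatrix_mulVec_eq_smul_iff]
  simp

theorem mhdMatrix_mulVec_alfvenVec {s l : ℝ} (hρ : 0 < ρ) (hs : s ^ 2 = 1) (hl : l = s * ca)
    (hca : |b1| = √ρ * ca) (hβ1 : β1 * b1 = |b1|) (hparallel : b2 * β3 = b3 * β2) :
    mhdMatrix γ ρ p u b1 b2 b3 *ᵥ alfvenVec ρ β1 β2 β3 s =
      (u + l) • alfvenVec ρ β1 β2 β3 s := by
  have hσ : √ρ ^ 2 = ρ := Real.sq_sqrt hρ.le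
  have htension : b1 * (√ρ * β1) / ρ = ca := by
    rw [div_eq_iff hρ.ne']
    linear_combination √ρ * hβ1 + √ρ * hca + ca * hσ
  have hb1 : b1 = √ρ * ca * β1 := by
    rw [← hca, abs_mul_eq_self_of_mul_self_eq_abs hβ1]
  rw [alfvenVec, mhdMatrix_mulVec_eq_smul_iff, hl]
  refine ⟨by ring, ?_, ?_, ?_, by ring, by ring, ?_, ?_⟩
  · linear_combination -(√ρ * β1 / ρ) * hparallel
  · linear_combination β3 * htension - ca * β3 * hs
  · linear_combination -β2 * htension + ca * β2 * hs
  · linear_combination -s * β3 * hb1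
  · linear_combination s * β2 * hb1

theorem mhdMatrix_mulVec_magnetosonicVec {α α' l m : ℝ} (hρ : 0 < ρ) (hc : 0 < c)
    (hsound : ρ * c ^ 2 = γ * p) (hca : |b1| = √ρ * ca) (hβ1 : β1 * b1 = |b1|)
    (hβ : β2 ^ 2 + β3 ^ 2 = 1) (hb2 : b2 = √ρ * k * β2) (hb3 : b3 = √ρ * k * β3)
    (hlm : l * m = c * ca)
    (hα' : α' * (c * k) = α * (l ^ 2 - c ^ 2)) (hα : α * (c * k) = α' * (c ^ 2 - m ^ 2)) :
    mhdMatrix γ ρ p u b1 b2 b3 *ᵥ magnetosonicVec ρ c β1 β2 β3 α α' l m =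
      (u + l) • magnetosonicVec ρ c β1 β2 β3 α α' l m := by
  have hσ : √ρ ^ 2 = ρ := Real.sq_sqrt hρ.le
  have hb1 : b1 = √ρ * ca * β1 := by
    rw [← hca, abs_mul_eq_self_of_mul_self_eq_abs hβ1]
  have hpressure :
      (α * ρ * c ^ 2 + b2 * (α' * √ρ * c * β2) + b3 * (α' * √ρ * c * β3)) / ρ = l * (α * l) := by
    rw [div_eq_iff hρ.ne', hb2, hb3]
    linear_combination ρ * hα' + α' * c * k * √ρ ^ 2 * hβ + α' * c * k * hσ
  have htension : b1 * (α' * √ρ * c) / ρ = l * (α' * m * β1) := by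
    rw [div_eq_iff hρ.ne', hb1]
    linear_combination α' * β1 * (ca * c * hσ - ρ * hlm)
  have hinduction : √ρ * k * (α * l) + b1 * (α' * m * β1) = l * (α' * √ρ * c) := by
    apply mul_left_cancel₀ hc.ne'
    linear_combination √ρ * l * hα + c * α' * m * (hβ1 + hca) - √ρ * α' * m * hlm
  rw [magnetosonicVec, mhdMatrix_mulVec_eq_smul_iff]
  refine ⟨by ring, hpressure, ?_, ?_, ?_, by ring, ?_, ?_⟩
  · linear_combination -β2 * htension
  · linear_combination -β3 * htension
  · linear_combination -α * l * hsound
  · linear_combination β2 * hinduction + α * l * hb2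
  · linear_combination β3 * hinduction + α * l * hb3

end Eigenvectors

theorem mhd_right_eigendecomposition_general
    {γ ρ p u b1 b2 b3 k c ca cf cs β1 β2 β3 αf αs : ℝ}
    (hρ : 0 < ρ) (hc : 0 < c) (hsound : ρ * c ^ 2 = γ * p)
    (hca : |b1| = √ρ * ca) (hβ1 : β1 * b1 = |b1|)
    (hk : 0 ≤ k) (hβ : β2 ^ 2 + β3 ^ 2 = 1) (hb2 : b2 = √ρ * k * β2) (hb3 : b3 = √ρ * k * β3)
    (hspeeds : IsMagnetosonicPair c ca k cf cs) (hα : IsMagnetosonicWeights c cf cs αf αs) :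
    mhdMatrix γ ρ p u b1 b2 b3 * rightEigenvectorMatrix ρ c cf cs β1 β2 β3 αf αs =
      rightEigenvectorMatrix ρ c cf cs β1 β2 β3 αf αs *
        diagonal ![u - cf, u - ca, u - cs, u, u, u + cs, u + ca, u + cf] := by
  have hck : 0 ≤ c * k := mul_nonneg hc.le hk
  have hαs := hspeeds.slowWeight_mul hα hck
  have hαf := hspeeds.fastWeight_mul hα hck
  have hfast (l m : ℝ) (hl : l ^ 2 = cf ^ 2) (hm : m ^ 2 = cs ^ 2) (hlm : l * m = cf * cs) :
      mhdMatrix γ ρ p u b1 b2 b3 *ᵥ magnetosonicVec ρ c β1 β2 β3 αf αs l m = (u + l) • _ :=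
    mhdMatrix_mulVec_magnetosonicVec hρ hc hsound hca hβ1 hβ hb2 hb3
      (hlm.trans hspeeds.fast_mul_slow) (hl ▸ hαs) (hm ▸ hαf)
  have hslow (l m : ℝ) (hl : l ^ 2 = cs ^ 2) (hm : m ^ 2 = cf ^ 2) (hlm : l * m = cf * cs) :
      mhdMatrix γ ρ p u b1 b2 b3 *ᵥ magnetosonicVec ρ c β1 β2 β3 αs (-αf) l m = (u + l) • _ :=
    mhdMatrix_mulVec_magnetosonicVec hρ hc hsound hca hβ1 hβ hb2 hb3
      (hlm.trans hspeeds.fast_mul_slow) (by rw [hl]; linear_combination -hαf)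
      (by rw [hm]; linear_combination hαs)
  have halfven (s l : ℝ) (h : s ^ 2 = 1) (hl : l = s * ca) :
      mhdMatrix γ ρ p u b1 b2 b3 *ᵥ alfvenVec ρ β1 β2 β3 s = (u + l) • _ :=
    mhdMatrix_mulVec_alfvenVec hρ h hl hca hβ1 (by rw [hb2, hb3]; ring)
  rw [mul_eq_mul_diagonal_iff_mulVec]
  intro j
  fin_cases j
  · exact hfast (-cf) (-cs) (neg_sq cf) (neg_sq cs) (neg_mul_neg cf cs)
  · exact halfven (-1) (-ca) (by norm_num) (neg_one_mul ca).symm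
  · exact hslow (-cs) (-cf) (neg_sq cs) (neg_sq cf) (by ring)
  · exact mhdMatrix_mulVec_density_normalField 1 0
  · exact mhdMatrix_mulVec_density_normalField 0 1
  · exact hslow cs cf rfl rfl (mul_comm cs cf)
  · exact halfven 1 ca (one_pow 2) (one_mul ca).symm
  · exact hfast cf cs rfl rfl rfl

/-- Right eigenvector decomposition of the primitive-variable MHD matrix: if `T^x` is the
matrix whose columns are the fast, Alfvén, slow, entropy, and divergence eigenvectors
`r₁, …, r₈` and `Λ = diag(u − c_f, u − c_a, u − c_s, u, u, u + c_s, u + c_a, u + c_f)`,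
then `D^x · T^x = T^x · Λ`. -/
theorem mhd_right_eigendecomposition
    (γ ρ p u v w b1 b2 b3 c ca D cf cs β1 β2 β3 αf αs : ℝ)
    (hγ : 1 < γ) (hρ : 0 < ρ) (hp : 0 < p) (hb : b2 ^ 2 + b3 ^ 2 > 0)
    (Dx : Matrix (Fin 8) (Fin 8) ℝ)
    (hDx : Dx = !![u, ρ, 0, 0, 0, 0, 0, 0;
                   0, u, 0, 0, 1/ρ, 0, b2/ρ, b3/ρ;
                   0, 0, u, 0, 0, 0, -b1/ρ, 0;
                   0, 0, 0, u, 0, 0, 0, -b1/ρ;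
                   0, γ*p, 0, 0, u, 0, 0, 0;
                   0, 0, 0, 0, 0, u, 0, 0;
                   0, b2, -b1, 0, 0, 0, u, 0;
                   0, b3, 0, -b1, 0, 0, 0, u])
    (hc : c = Real.sqrt (γ * p / ρ))
    (hca : ca = Real.sqrt (b1 ^ 2 / ρ))
    (hD : D = (c ^ 2 + (b1 ^ 2 + b2 ^ 2 + b3 ^ 2) / ρ) ^ 2 - 4 * c ^ 2 * b1 ^ 2 / ρ)
    (hcf : cf = Real.sqrt ((c ^ 2 + (b1 ^ 2 + b2 ^ 2 + b3 ^ 2) / ρ + Real.sqrt D) / 2))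
    (hcs : cs = Real.sqrt ((c ^ 2 + (b1 ^ 2 + b2 ^ 2 + b3 ^ 2) / ρ - Real.sqrt D) / 2))
    (hβ1 : β1 = Real.sign b1)
    (hβ2 : β2 = b2 / Real.sqrt (b2 ^ 2 + b3 ^ 2))
    (hβ3 : β3 = b3 / Real.sqrt (b2 ^ 2 + b3 ^ 2))
    (hαf : αf = Real.sqrt ((c ^ 2 - cs ^ 2) / (cf ^ 2 - cs ^ 2)))
    (hαs : αs = Real.sqrt ((cf ^ 2 - c ^ 2) / (cf ^ 2 - cs ^ 2)))
    (r1 r2 r3 r4 r5 r6 r7 r8 : Fin 8 → ℝ)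
    (hr1 : r1 = ![αf * ρ, -αf * cf, αs * cs * β1 * β2, αs * cs * β1 * β3,
        αf * ρ * c ^ 2, 0, αs * Real.sqrt ρ * c * β2, αs * Real.sqrt ρ * c * β3])
    (hr2 : r2 = ![0, 0, -β3, β2, 0, 0, -(Real.sqrt ρ * β1 * β3), Real.sqrt ρ * β1 * β2])
    (hr3 : r3 = ![αs * ρ, -αs * cs, -(αf * cf * β1 * β2), -(αf * cf * β1 * β3),
        αs * ρ * c ^ 2, 0, -(αf * Real.sqrt ρ * c * β2), -(αf * Real.sqrt ρ * c * β3)])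
    (hr4 : r4 = ![1, 0, 0, 0, 0, 0, 0, 0])
    (hr5 : r5 = ![0, 0, 0, 0, 0, 1, 0, 0])
    (hr6 : r6 = ![αs * ρ, αs * cs, αf * cf * β1 * β2, αf * cf * β1 * β3,
        αs * ρ * c ^ 2, 0, -(αf * Real.sqrt ρ * c * β2), -(αf * Real.sqrt ρ * c * β3)])
    (hr7 : r7 = ![0, 0, β3, -β2, 0, 0, -(Real.sqrt ρ * β1 * β3), Real.sqrt ρ * β1 * β2])
    (hr8 : r8 = ![αf * ρ, αf * cf, -(αs * cs * β1 * β2), -(αs * cs * β1 * β3),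
        αf * ρ * c ^ 2, 0, αs * Real.sqrt ρ * c * β2, αs * Real.sqrt ρ * c * β3])
    (Tx : Matrix (Fin 8) (Fin 8) ℝ)
    (hTx : Tx = Matrix.transpose (Matrix.of ![r1, r2, r3, r4, r5, r6, r7, r8])) :
    Dx * Tx =
      Tx * Matrix.diagonal ![u - cf, u - ca, u - cs, u, u, u + cs, u + ca, u + cf] := by
  have hc0 : 0 < c := hc ▸ Real.sqrt_pos.2 (by positivity)
  have hsound : ρ * c ^ 2 = γ * p := by
    rw [hc, Real.sq_sqrt (by positivity), mul_div_cancel₀ _ hρ.ne']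
  have hb1 : |b1| = √ρ * ca := by rw [hca, sqrt_mul_sqrt_div hρ, Real.sqrt_sq_eq_abs]
  have hk : 0 < √((b2 ^ 2 + b3 ^ 2) / ρ) := Real.sqrt_pos.2 (by positivity)
  have hspeeds : IsMagnetosonicPair c ca √((b2 ^ 2 + b3 ^ 2) / ρ) cf cs := by
    rw [hcf, hcs, hD, hca]
    exact isMagnetosonicPair_sqrt_field hρ hc0.le
  have hα : IsMagnetosonicWeights c cf cs αf αs := by
    rw [hαf, hαs]
    exact hspeeds.isMagnetosonicWeights_sqrt (hspeeds.slow_lt_fast hc0.ne' hk.ne')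
  have hT : Tx = rightEigenvectorMatrix ρ c cf cs β1 β2 β3 αf αs := by
    simp [rightEigenvectorMatrix, magnetosonicVec, alfvenVec, *]
  rw [hT, hDx]
  exact mhd_right_eigendecomposition_general hρ hc0 hsound hb1 (hβ1 ▸ sign_mul_self_eq_abs b1) hk.le
    (by rw [hβ2, hβ3, div_sqrt_sq_add_div_sqrt_sq hb])
    (by rw [sqrt_mul_sqrt_div hρ, hβ2, mul_div_cancel₀ _ (Real.sqrt_ne_zero'.2 hb)])
    (by rw [sqrt_mul_sqrt_div hρ, hβ3, mul_div_cancel₀ _ (Real.sqrt_ne_zero'.2 hb)]) hspeeds hα
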